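/- Let S be a real symmetric d×d matrix of full rank with exactly m positive eigenvalues and G a maximal S-monotone set. Then the multi-functions P_G and ∂ψ_G have the same domain D, and for every y: P_G(y) = {x ∈ G : Sx ∈ ∂ψ_G(y)} = {x ∈ G : y ∈ ∂ψ_G*(Sx)}. Moreover, for every y ∈ D, ∂ψ_G(y) = clconv(S·P_G(y)) + N_{cl D}(y), where S·P_G(y) := {Sx : x ∈ P_G(y)} and N_{cl D}(y) is the normal cone to the closure of D at y. In particular, if D has nonempty interior, then ∂ψ_G(y) = conv(S·P_G(y)) for every y in the interior of D (which equals the interior of dom ψ_G). -/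

import Mathlib

/-!
Writing `c = S x`, the Fitzpatrick function is a supremum `f(y) = sup_{c ∈ K} (⟨c, y⟩ - a(c))` of
affine functions with a closed set of slopes `K = S G` and a continuous offset `a`, and `P_G(y)`
corresponds to the slopes attaining the supremum.

For such a supremum whose domain has an interior point `z`, slopes whose affine function is bounded
below at `z` form a bounded set (`isBounded_slopes`). Hence the supremum is attained in the interior
of the domain. If `s` is a subgradient at a boundary point `y`, take active slopes at points tending
to `y` along a segment that enters the interior in the direction `v`: monotonicity of the
subdifferential keeps them bounded, and a limit point is an active slope `p` at `y` with
`⟨p, v⟩ ≥ ⟨s, v⟩` (`exists_act_ge`). This yields the equality of the domains, and, since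
`clconv (active slopes) + normal cone` is closed (`isClosed_hull_add_cone`), a separation argument
gives the subdifferential formula (`sgr_subset`).

The domain of `ψ_G` may have empty interior, and here maximality enters: if `v` is orthogonal to the
affine hull of the domain, then `G` is invariant under translation by `S⁻¹ v` (`shift_mem`), because
`ψ_G ≤ S/2` holds only on `G`. So the slopes parallel to the affine hull already determine `ψ_G` on
its domain, and the supremum over those slopes has a domain with nonempty interior
(`exists_reduction`).
-/

open MeasureTheory Filter Set Matrix

noncomputable section

/-- The bilinear form of the matrix `S`: `S(x,y) = ⟨x, Sy⟩`. -/
def Sb {d : ℕ} (S : Matrix (Fin d) (Fin d) ℝ) (x y : Fin d → ℝ) : ℝ :=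
  x ⬝ᵥ S.mulVec y

/-- A set `G` is `S`-monotone if `S(x-y,x-y) ≥ 0` for all `x, y ∈ G`. -/
def SMono {d : ℕ} (S : Matrix (Fin d) (Fin d) ℝ) (G : Set (Fin d → ℝ)) : Prop :=
  ∀ x ∈ G, ∀ y ∈ G, 0 ≤ Sb S (x - y) (x - y)

/-- Maximal `S`-monotone set. -/
def MaxSMono {d : ℕ} (S : Matrix (Fin d) (Fin d) ℝ) (G : Set (Fin d → ℝ)) : Prop :=
  SMono S G ∧ ∀ H, SMono S H → G ⊆ H → H = G

/-- The Fitzpatrick function `ψ_G(y) = sup_{x∈G} (S(x,y) - S(x,x)/2)`, with values in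
`ℝ ∪ {+∞}` (modeled in `EReal`). -/
def fitz {d : ℕ} (S : Matrix (Fin d) (Fin d) ℝ) (G : Set (Fin d → ℝ))
    (y : Fin d → ℝ) : EReal :=
  ⨆ x ∈ G, ((Sb S x y - Sb S x x / 2 : ℝ) : EReal)

/-- Positive part of an extended real number, in `ℝ≥0∞`. -/
def epos (x : EReal) : ENNReal := if x = ⊤ then ⊤ else ENNReal.ofReal x.toReal

/-- Integral of an `EReal`-valued function: positive part minus negative part. -/
def eInt {α : Type*} [MeasurableSpace α] (μ : Measure α) (f : α → EReal) : EReal :=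
  ((∫⁻ a, epos (f a) ∂μ : ENNReal) : EReal) - ((∫⁻ a, epos (-(f a)) ∂μ : ENNReal) : EReal)

/-- The martingale property of a measure `γ(dx,dy)` on `ℝ^d × ℝ^d`: the conditional
expectation of `y` given `x` equals `x`, `γ`-a.s. -/
def MartProp {d : ℕ} (γ : Measure ((Fin d → ℝ) × (Fin d → ℝ))) : Prop :=
  γ[(fun p => p.2) | MeasurableSpace.comap Prod.fst inferInstance] =ᵐ[γ] fun p => p.1

/-- `γ ∈ Γ(ν)`: probability measures on `ℝ^d × ℝ^d` with finite second moment,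
`y`-marginal `ν` and the martingale property. -/
def MGamma {d : ℕ} (ν : Measure (Fin d → ℝ))
    (γ : Measure ((Fin d → ℝ) × (Fin d → ℝ))) : Prop :=
  IsProbabilityMeasure γ ∧ γ.map Prod.snd = ν ∧
    Integrable (fun p => ‖p.1‖ ^ 2 + ‖p.2‖ ^ 2) γ ∧ MartProp γ

/-- Value of the primal problem: `(1/2) ∫ S(x,y) dγ`. -/
def primalVal {d : ℕ} (S : Matrix (Fin d) (Fin d) ℝ)
    (γ : Measure ((Fin d → ℝ) × (Fin d → ℝ))) : ℝ :=
  (1 / 2) * ∫ p, Sb S p.1 p.2 ∂γ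

/-- `γ` is an optimal plan for the primal problem. -/
def PrimalOpt {d : ℕ} (S : Matrix (Fin d) (Fin d) ℝ) (ν : Measure (Fin d → ℝ))
    (γ : Measure ((Fin d → ℝ) × (Fin d → ℝ))) : Prop :=
  MGamma ν γ ∧ ∀ γ', MGamma ν γ' → primalVal S γ' ≤ primalVal S γ

/-- `G` is an optimal set for the dual problem: minimize `∫ ψ_G dν` over maximal
`S`-monotone sets. -/
def DualOpt {d : ℕ} (S : Matrix (Fin d) (Fin d) ℝ) (ν : Measure (Fin d → ℝ))
    (G : Set (Fin d → ℝ)) : Prop :=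
  MaxSMono S G ∧ ∀ H, MaxSMono S H → eInt ν (fitz S G) ≤ eInt ν (fitz S H)

/-- The support of a measure: points all of whose neighborhoods have positive measure. -/
def msupp {α : Type*} [TopologicalSpace α] [MeasurableSpace α] (μ : Measure α) : Set α :=
  {x | ∀ U ∈ nhds x, μ U ≠ 0}

/-- The `S`-projection on `G`: minimizers over `G` of `z ↦ S(z-y,z-y)`. -/
def SProj {d : ℕ} (S : Matrix (Fin d) (Fin d) ℝ) (G : Set (Fin d → ℝ))
    (y : Fin d → ℝ) : Set (Fin d → ℝ) :=
  {x ∈ G | ∀ z ∈ G, Sb S (x - y) (x - y) ≤ Sb S (z - y) (z - y)}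

/-- The inverse image of the projection: `P_G^{-1}(x) = {y : x ∈ P_G(y)}`. -/
def SProjInv {d : ℕ} (S : Matrix (Fin d) (Fin d) ℝ) (G : Set (Fin d → ℝ))
    (x : Fin d → ℝ) : Set (Fin d → ℝ) :=
  {y | x ∈ SProj S G y}

/-- `Q_G(x) = ∪_{n ≥ 1} Q_G^{1/n}(x)`, where
`Q_G^ε(x) = {y ∈ P_G^{-1}(x) : x + ε (x - y) ∈ P_G^{-1}(x)}`. -/
def QG {d : ℕ} (S : Matrix (Fin d) (Fin d) ℝ) (G : Set (Fin d → ℝ))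
    (x : Fin d → ℝ) : Set (Fin d → ℝ) :=
  ⋃ n : ℕ, {y ∈ SProjInv S G x |
    x + ((1 : ℝ) / (n + 1)) • (x - y) ∈ SProjInv S G x}


/-- Convexity of an `EReal`-valued function on `ℝ^d`. -/
def EConvexOn {d : ℕ} (f : (Fin d → ℝ) → EReal) : Prop :=
  ∀ x y : Fin d → ℝ, ∀ t : ℝ, 0 < t → t < 1 →
    f (t • x + (1 - t) • y) ≤ (t : EReal) * f x + ((1 - t : ℝ) : EReal) * f y

/-- The convex conjugate of an `EReal`-valued function on `ℝ^d`. -/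
def econj {d : ℕ} (f : (Fin d → ℝ) → EReal) (y : Fin d → ℝ) : EReal :=
  ⨆ x : Fin d → ℝ, (((y ⬝ᵥ x : ℝ) : EReal) - f x)

/-- The subdifferential of an `EReal`-valued function on `ℝ^d`:
`∂f(x) = {z : f(y) - f(x) ≥ ⟨z, y - x⟩ for all y}`. -/
def esubdiff {d : ℕ} (f : (Fin d → ℝ) → EReal) (x : Fin d → ℝ) : Set (Fin d → ℝ) :=
  {z | ∀ y : Fin d → ℝ, ((z ⬝ᵥ (y - x) : ℝ) : EReal) ≤ f y - f x}

/-- The normal cone to a set `C ⊆ ℝ^d` at a point `x`. -/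
def normalCone {d : ℕ} (C : Set (Fin d → ℝ)) (x : Fin d → ℝ) : Set (Fin d → ℝ) :=
  {s | ∀ y ∈ C, s ⬝ᵥ (y - x) ≤ 0}

/-! ### Suprema of affine functions whose domain has nonempty interior -/

/-- `UBd K a y M` says that `f(y) ≤ M`, where `f(y) = sup_{c ∈ K} (⟨c, y⟩ - a(c))`. Working with the
upper bounds of the supremum avoids extended real arithmetic. -/
def UBd {d : ℕ} (K : Set (Fin d → ℝ)) (a : (Fin d → ℝ) → ℝ) (y : Fin d → ℝ) (M : ℝ) : Prop :=
  ∀ c ∈ K, c ⬝ᵥ y - a c ≤ M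

/-- The effective domain of `f(y) = sup_{c ∈ K} (⟨c, y⟩ - a(c))`. -/
def sdom {d : ℕ} (K : Set (Fin d → ℝ)) (a : (Fin d → ℝ) → ℝ) : Set (Fin d → ℝ) :=
  {y | ∃ M, UBd K a y M}

/-- The active slopes at `y`: those `c ∈ K` at which the supremum defining `f(y)` is attained. -/
def act {d : ℕ} (K : Set (Fin d → ℝ)) (a : (Fin d → ℝ) → ℝ) (y : Fin d → ℝ) :
    Set (Fin d → ℝ) :=
  {c ∈ K | UBd K a y (c ⬝ᵥ y - a c)}

/-- The subdifferential of `f` at `y`: the inequality `f(y) + ⟨s, z - y⟩ ≤ f(z)` is tested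
against every upper bound `M` of `f(z)`. If `f` is finite somewhere, it forces `f(y) < ∞`. -/
def sgr {d : ℕ} (K : Set (Fin d → ℝ)) (a : (Fin d → ℝ) → ℝ) (y : Fin d → ℝ) :
    Set (Fin d → ℝ) :=
  {s | ∀ z M, UBd K a z M → UBd K a y (M - s ⬝ᵥ (z - y))}

section General

variable {d : ℕ} {K : Set (Fin d → ℝ)} {a : (Fin d → ℝ) → ℝ}

lemma continuous_dot_right (c : Fin d → ℝ) : Continuous fun y : Fin d → ℝ => c ⬝ᵥ y := by
  unfold dotProduct; fun_prop

lemma continuous_dot_left (y : Fin d → ℝ) : Continuous fun c : Fin d → ℝ => c ⬝ᵥ y := by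
  unfold dotProduct; fun_prop

lemma continuous_dot : Continuous fun p : (Fin d → ℝ) × (Fin d → ℝ) => p.1 ⬝ᵥ p.2 := by
  unfold dotProduct; fun_prop

lemma linear_eq_dot (f : (Fin d → ℝ) →ₗ[ℝ] ℝ) : ∃ v : Fin d → ℝ, ∀ x, f x = v ⬝ᵥ x := by
  refine ⟨fun i => f (Pi.single i 1), fun x => ?_⟩
  conv_lhs => rw [pi_eq_sum_univ' x]
  simp only [map_sum, map_smul, dotProduct, smul_eq_mul]
  exact Finset.sum_congr rfl fun i _ => by rw [mul_comm]

lemma UBd.mono {y : Fin d → ℝ} {M M' : ℝ} (h : UBd K a y M) (hM : M ≤ M') : UBd K a y M' :=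
  fun c hc => (h c hc).trans hM

lemma convex_sdom : Convex ℝ (sdom K a) := by
  rintro x ⟨M, hM⟩ y ⟨M', hM'⟩ p q hp hq hpq
  refine ⟨p * M + q * M', fun c hc => ?_⟩
  have h1 := mul_le_mul_of_nonneg_left (hM c hc) hp
  have h2 := mul_le_mul_of_nonneg_left (hM' c hc) hq
  have h3 : a c = p * a c + q * a c := by rw [← add_mul, hpq, one_mul]
  simp only [dotProduct_add, dotProduct_smul, smul_eq_mul]
  linarith

lemma act_subset_sgr (y : Fin d → ℝ) : act K a y ⊆ sgr K a y := by
  rintro c ⟨hc, hy⟩ z M hM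
  refine hy.mono ?_
  have := hM c hc
  simp only [dotProduct_sub]
  linarith

lemma mem_sdom_of_sgr {y s : Fin d → ℝ} (hne : (sdom K a).Nonempty) (hs : s ∈ sgr K a y) :
    y ∈ sdom K a := by
  obtain ⟨z, M, hM⟩ := hne
  exact ⟨_, hs z M hM⟩

lemma convex_sgr (y : Fin d → ℝ) : Convex ℝ (sgr K a y) := by
  intro s hs t ht p q hp hq hpq z M hM c hc
  have h1 := mul_le_mul_of_nonneg_left (hs z M hM c hc) hp
  have h2 := mul_le_mul_of_nonneg_left (ht z M hM c hc) hq
  have h3 : p * (c ⬝ᵥ y - a c) + q * (c ⬝ᵥ y - a c) = c ⬝ᵥ y - a c := by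
    rw [← add_mul, hpq, one_mul]
  have h4 : p * M + q * M = M := by rw [← add_mul, hpq, one_mul]
  simp only [add_dotProduct, smul_dotProduct, smul_eq_mul]
  linarith

lemma isClosed_sgr (y : Fin d → ℝ) : IsClosed (sgr K a y) := by
  simp only [sgr, UBd, ofPred_forall]
  refine isClosed_iInter fun z => isClosed_iInter fun M => isClosed_iInter fun _ =>
    isClosed_iInter fun c => isClosed_iInter fun _ => ?_
  exact isClosed_le continuous_const (continuous_const.sub (continuous_dot_left _))

lemma closure_convexHull_act_subset (y : Fin d → ℝ) :
    closure (convexHull ℝ (act K a y)) ⊆ sgr K a y :=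
  closure_minimal (convexHull_min (act_subset_sgr y) (convex_sgr y)) (isClosed_sgr y)

lemma isClosed_normalCone (C : Set (Fin d → ℝ)) (y : Fin d → ℝ) :
    IsClosed (normalCone C y) := by
  simp only [normalCone, ofPred_forall]
  exact isClosed_iInter fun z => isClosed_iInter fun _ =>
    isClosed_le (continuous_dot_left _) continuous_const

lemma convex_normalCone (C : Set (Fin d → ℝ)) (y : Fin d → ℝ) :
    Convex ℝ (normalCone C y) := by
  intro s hs t ht p q hp hq _ z hz
  have h1 := mul_nonneg hp (neg_nonneg.2 (hs z hz))
  have h2 := mul_nonneg hq (neg_nonneg.2 (ht z hz))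
  simp only [add_dotProduct, smul_dotProduct, smul_eq_mul]
  linarith

lemma normalCone_closure (C : Set (Fin d → ℝ)) (y : Fin d → ℝ) :
    normalCone (closure C) y = normalCone C y := by
  refine Subset.antisymm (fun s hs z hz => hs z (subset_closure hz)) fun s hs z hz => ?_
  have hcl : IsClosed {z | s ⬝ᵥ (z - y) ≤ 0} :=
    isClosed_le ((continuous_dot_right s).comp (continuous_id.sub continuous_const))
      continuous_const
  exact closure_minimal (fun z hz => hs z hz) hcl hz

lemma add_normal_mem_sgr {y s n : Fin d → ℝ} (hs : s ∈ sgr K a y)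
    (hn : n ∈ normalCone (sdom K a) y) : s + n ∈ sgr K a y := by
  intro z M hM
  refine (hs z M hM).mono ?_
  have := hn z ⟨M, hM⟩
  simp only [add_dotProduct]
  linarith

/-- Around an interior point of the domain, `f` is bounded on a small cross-polytope. -/
lemma exists_bound_of_interior {z : Fin d → ℝ} (hz : z ∈ interior (sdom K a)) :
    ∃ r > 0, ∃ M, ∀ i, UBd K a (z + Pi.single i r) M ∧ UBd K a (z - Pi.single i r) M := by
  obtain ⟨ε, hε, hb⟩ := Metric.isOpen_iff.1 isOpen_interior z hz
  have h1 : ∀ i : Fin d, z + Pi.single i (ε / 2) ∈ sdom K a := fun i =>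
    interior_subset (hb (by
      rw [Metric.mem_ball, dist_eq_norm, add_sub_cancel_left, Pi.norm_single, Real.norm_eq_abs,
        abs_of_pos (half_pos hε)]
      exact half_lt_self hε))
  have h2 : ∀ i : Fin d, z - Pi.single i (ε / 2) ∈ sdom K a := fun i =>
    interior_subset (hb (by
      rw [Metric.mem_ball, dist_comm, dist_eq_norm, sub_sub_cancel, Pi.norm_single,
        Real.norm_eq_abs, abs_of_pos (half_pos hε)]
      exact half_lt_self hε))
  choose M1 hM1 using h1
  choose M2 hM2 using h2
  refine ⟨ε / 2, half_pos hε, ∑ i, (|M1 i| + |M2 i|), fun i => ?_⟩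
  have h3 : |M1 i| + |M2 i| ≤ ∑ i, (|M1 i| + |M2 i|) :=
    Finset.single_le_sum (f := fun i => |M1 i| + |M2 i|) (fun _ _ => by positivity)
      (Finset.mem_univ i)
  exact ⟨(hM1 i).mono (by linarith [le_abs_self (M1 i), abs_nonneg (M2 i)]),
    (hM2 i).mono (by linarith [le_abs_self (M2 i), abs_nonneg (M1 i)])⟩

/-- Slopes of the family whose affine function is bounded below at an interior point of the
domain form a bounded set: this is the source of all compactness below. -/
lemma isBounded_slopes {z : Fin d → ℝ} (hz : z ∈ interior (sdom K a)) (B : ℝ) :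
    Bornology.IsBounded {c ∈ K | B ≤ c ⬝ᵥ z - a c} := by
  obtain ⟨r, hr, M, hM⟩ := exists_bound_of_interior hz
  refine (Metric.isBounded_closedBall (x := (0 : Fin d → ℝ)) (r := |M - B| / r)).subset ?_
  rintro c ⟨hc, hB⟩
  rw [mem_closedBall_zero_iff, pi_norm_le_iff_of_nonneg (by positivity)]
  intro i
  have h1 := (hM i).1 c hc
  have h2 := (hM i).2 c hc
  simp only [dotProduct_add, dotProduct_sub, dotProduct_single] at h1 h2
  have habs : |c i| * r = |c i * r| := by rw [abs_mul, abs_of_pos hr]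
  rw [Real.norm_eq_abs, le_div_iff₀ hr, habs]
  refine (abs_le.2 ⟨?_, ?_⟩).trans (le_abs_self _) <;> linarith

lemma isCompact_slopes (hK : IsClosed K) (ha : Continuous a) {z : Fin d → ℝ}
    (hz : z ∈ interior (sdom K a)) (B : ℝ) : IsCompact {c ∈ K | B ≤ c ⬝ᵥ z - a c} := by
  refine Metric.isCompact_of_isClosed_isBounded ?_ (isBounded_slopes hz B)
  exact hK.inter (isClosed_le continuous_const ((continuous_dot_left z).sub ha))

lemma act_nonempty_of_interior (hK : IsClosed K) (ha : Continuous a) (hne : K.Nonempty)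
    {y : Fin d → ℝ} (hy : y ∈ interior (sdom K a)) : (act K a y).Nonempty := by
  obtain ⟨c0, hc0⟩ := hne
  obtain ⟨c, ⟨hc, hc'⟩, hmax⟩ := (isCompact_slopes hK ha hy (c0 ⬝ᵥ y - a c0)).exists_isMaxOn
    ⟨c0, hc0, le_rfl⟩ ((continuous_dot_left y).sub ha).continuousOn
  refine ⟨c, hc, fun c' hc'' => ?_⟩
  by_cases h : c0 ⬝ᵥ y - a c0 ≤ c' ⬝ᵥ y - a c'
  · exact hmax ⟨hc'', h⟩
  · linarith

/-- If the segment from `y` in direction `v` enters the interior of the domain, then active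
slopes at points tending to `y` along it accumulate at an active slope at `y`, and
monotonicity of the subdifferential compares the limit with any given subgradient. -/
lemma exists_act_ge (hK : IsClosed K) (ha : Continuous a) (hne : K.Nonempty)
    {y s v : Fin d → ℝ} (hs : s ∈ sgr K a y) {t0 : ℝ} (ht0 : 0 < t0)
    (hv : y + t0 • v ∈ interior (sdom K a)) : ∃ p ∈ act K a y, s ⬝ᵥ v ≤ p ⬝ᵥ v := by
  have hy : y ∈ sdom K a := mem_sdom_of_sgr ⟨_, interior_subset hv⟩ hs
  obtain ⟨c0, hc0⟩ := hne
  set t : ℕ → ℝ := fun n => t0 * (1 / ((n : ℝ) + 1)) with ht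
  have htpos : ∀ n, 0 < t n := fun n => by positivity
  have htle : ∀ n, t n ≤ t0 := fun n => by
    refine mul_le_of_le_one_right ht0.le ?_
    rw [div_le_one (by positivity)]
    linarith [Nat.cast_nonneg (α := ℝ) n]
  have htlim : Tendsto t atTop (nhds 0) := by
    have := (tendsto_one_div_add_atTop_nhds_zero_nat (𝕜 := ℝ)).const_mul t0
    rwa [mul_zero] at this
  have hint : ∀ n, y + t n • v ∈ interior (sdom K a) := fun n => by
    have := convex_sdom.add_smul_mem_interior hy hv (t := t n / t0)
      ⟨div_pos (htpos n) ht0, (div_le_one ht0).2 (htle n)⟩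
    rwa [smul_smul, div_mul_cancel₀ _ ht0.ne'] at this
  have hex : ∀ n, ∃ c, c ∈ act K a (y + t n • v) := fun n =>
    act_nonempty_of_interior hK ha ⟨c0, hc0⟩ (hint n)
  choose c hc using hex
  have hcv : ∀ n, s ⬝ᵥ v ≤ c n ⬝ᵥ v := fun n => by
    have h := hs _ _ (hc n).2 (c n) (hc n).1
    simp only [add_sub_cancel_left, dotProduct_add, dotProduct_smul, smul_eq_mul] at h
    have : t n * (s ⬝ᵥ v) ≤ t n * (c n ⬝ᵥ v) := by linarith
    exact le_of_mul_le_mul_left this (htpos n)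
  have hlow : ∀ n, c n ∈ {c ∈ K | c0 ⬝ᵥ y - a c0 - t0 * |c0 ⬝ᵥ v| - t0 * |s ⬝ᵥ v| ≤
      c ⬝ᵥ (y + t0 • v) - a c} := fun n => by
    refine ⟨(hc n).1, ?_⟩
    have h := (hc n).2 c0 hc0
    have h1 : (t0 - t n) * (s ⬝ᵥ v) ≤ (t0 - t n) * (c n ⬝ᵥ v) :=
      mul_le_mul_of_nonneg_left (hcv n) (sub_nonneg.2 (htle n))
    have h2 : t n * |c0 ⬝ᵥ v| ≤ t0 * |c0 ⬝ᵥ v| :=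
      mul_le_mul_of_nonneg_right (htle n) (abs_nonneg _)
    have h3 : t n * -|c0 ⬝ᵥ v| ≤ t n * (c0 ⬝ᵥ v) :=
      mul_le_mul_of_nonneg_left (neg_abs_le _) (htpos n).le
    have h4 : (t0 - t n) * -|s ⬝ᵥ v| ≤ (t0 - t n) * (s ⬝ᵥ v) :=
      mul_le_mul_of_nonneg_left (neg_abs_le _) (sub_nonneg.2 (htle n))
    have h5 : 0 ≤ t n * |s ⬝ᵥ v| := mul_nonneg (htpos n).le (abs_nonneg _)
    simp only [dotProduct_add, dotProduct_smul, smul_eq_mul] at h ⊢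
    linarith
  obtain ⟨p, hp, φ, hφ, hlim⟩ := (isCompact_slopes hK ha hv _).tendsto_subseq hlow
  have hpv : Tendsto (fun n => c (φ n) ⬝ᵥ v) atTop (nhds (p ⬝ᵥ v)) :=
    ((continuous_dot_left v).tendsto p).comp hlim
  refine ⟨p, ⟨hp.1, fun c' hc' => ?_⟩, ge_of_tendsto' hpv fun n => hcv _⟩
  have htφ := htlim.comp hφ.tendsto_atTop
  have hL : Tendsto (fun n => c' ⬝ᵥ y + t (φ n) * (c' ⬝ᵥ v) - a c') atTop
      (nhds (c' ⬝ᵥ y + 0 * (c' ⬝ᵥ v) - a c')) :=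
    ((htφ.mul_const _).const_add _).sub_const _
  have hR : Tendsto (fun n => c (φ n) ⬝ᵥ y + t (φ n) * (c (φ n) ⬝ᵥ v) - a (c (φ n))) atTop
      (nhds (p ⬝ᵥ y + 0 * (p ⬝ᵥ v) - a p)) :=
    ((((continuous_dot_left y).tendsto p).comp hlim).add (htφ.mul hpv)).sub
      ((ha.tendsto p).comp hlim)
  have := le_of_tendsto_of_tendsto' hL hR fun n => by
    have := (hc (φ n)).2 c' hc'
    simpa only [dotProduct_add, dotProduct_smul, smul_eq_mul] using this
  linarith

lemma act_nonempty_of_sgr (hK : IsClosed K) (ha : Continuous a) (hne : K.Nonempty)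
    (hint : (interior (sdom K a)).Nonempty) {y s : Fin d → ℝ} (hs : s ∈ sgr K a y) :
    (act K a y).Nonempty := by
  obtain ⟨z, hz⟩ := hint
  obtain ⟨p, hp, -⟩ := exists_act_ge hK ha hne hs (v := z - y) one_pos (by simpa using hz)
  exact ⟨p, hp⟩

/-- Subgradients at `y` with a lower bound in a direction pointing to an interior point of the
domain form a bounded set. -/
lemma isBounded_sgr {y z : Fin d → ℝ} (hne : K.Nonempty) (hz : z ∈ interior (sdom K a)) (B : ℝ) :
    Bornology.IsBounded {s ∈ sgr K a y | B ≤ s ⬝ᵥ (z - y)} := by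
  obtain ⟨r, hr, M, hM⟩ := exists_bound_of_interior hz
  obtain ⟨c0, hc0⟩ := hne
  set M' := M - (c0 ⬝ᵥ y - a c0) - B
  refine (Metric.isBounded_closedBall (x := (0 : Fin d → ℝ)) (r := |M'| / r)).subset ?_
  rintro c ⟨hc, hB⟩
  rw [mem_closedBall_zero_iff, pi_norm_le_iff_of_nonneg (by positivity)]
  intro i
  have h1 := hc _ _ (hM i).1 c0 hc0
  have h2 := hc _ _ (hM i).2 c0 hc0
  simp only [dotProduct_add, dotProduct_sub, dotProduct_single] at h1 h2 hB
  have habs : |c i| * r = |c i * r| := by rw [abs_mul, abs_of_pos hr]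
  rw [Real.norm_eq_abs, le_div_iff₀ hr, habs]
  refine (abs_le.2 ⟨?_, ?_⟩).trans (le_abs_self _) <;> simp only [M'] <;> linarith

open Pointwise in
/-- The normal cone contains no line, so it cannot cancel unbounded subgradients. -/
lemma isClosed_hull_add_cone (hne : K.Nonempty) (hint : (interior (sdom K a)).Nonempty)
    (y : Fin d → ℝ) :
    IsClosed (closure (convexHull ℝ (act K a y)) + normalCone (sdom K a) y) := by
  obtain ⟨z, hz⟩ := hint
  refine IsSeqClosed.isClosed fun x s hx hxs => ?_
  choose c hc n hn hcn using hx
  have hlim : Tendsto (fun k => x k ⬝ᵥ (z - y)) atTop (nhds (s ⬝ᵥ (z - y))) :=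
    ((continuous_dot_left _).tendsto s).comp hxs
  obtain ⟨B, hB⟩ := hlim.bddBelow_range
  have hlow : ∀ k, c k ∈ {s ∈ sgr K a y | B ≤ s ⬝ᵥ (z - y)} := fun k => by
    refine ⟨closure_convexHull_act_subset y (hc k), ?_⟩
    have h1 := hB ⟨k, rfl⟩
    have h2 := hn k z (interior_subset hz)
    simp only [← hcn k, add_dotProduct] at h1
    linarith
  obtain ⟨p, -, φ, hφ, hp⟩ := tendsto_subseq_of_bounded (isBounded_sgr hne hz B) hlow
  refine ⟨p, isClosed_closure.mem_of_tendsto hp (Eventually.of_forall fun k => hc _), s - p,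
    ?_, add_sub_cancel _ _⟩
  refine (isClosed_normalCone _ y).mem_of_tendsto ((hxs.comp hφ.tendsto_atTop).sub hp)
    (Eventually.of_forall fun k => ?_)
  have : x (φ k) - c (φ k) = n (φ k) := by rw [← hcn]; exact add_sub_cancel_left _ _
  simpa only [Function.comp, this] using hn (φ k)

/-- A direction that is nonpositive on the normal cone, tilted towards an interior point, enters
the interior of the domain. -/
lemma exists_enter_interior {y z v : Fin d → ℝ} (hy : y ∈ sdom K a)
    (hz : z ∈ interior (sdom K a)) (hv : ∀ n ∈ normalCone (sdom K a) y, n ⬝ᵥ v ≤ 0)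
    {ε : ℝ} (hε : 0 < ε) : ∃ t > (0 : ℝ), y + t • (v + ε • (z - y)) ∈ interior (sdom K a) := by
  by_contra! hcon
  set w := v + ε • (z - y)
  have hconv : Convex ℝ ((fun t : ℝ => y + t • w) '' Ioi 0) := by
    rintro _ ⟨p, hp, rfl⟩ _ ⟨q, hq, rfl⟩ α β hα hβ hαβ
    refine ⟨α • p + β • q, convex_Ioi 0 hp hq hα hβ hαβ, ?_⟩
    have : y = α • y + β • y := by rw [← add_smul, hαβ, one_smul]
    simp only [smul_add, smul_smul, smul_eq_mul, add_smul]
    nth_rewrite 1 [this]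
    abel
  obtain ⟨f, u, hf1, hf2⟩ := geometric_hahn_banach_open convex_sdom.interior isOpen_interior
    hconv (by
      rw [Set.disjoint_right]
      rintro _ ⟨t, ht, rfl⟩
      exact hcon t ht)
  obtain ⟨n, hn⟩ := linear_eq_dot (f : (Fin d → ℝ) →ₗ[ℝ] ℝ)
  replace hn : ∀ x, f x = n ⬝ᵥ x := hn
  simp only [hn] at hf1 hf2
  have hray : ∀ t > 0, u ≤ n ⬝ᵥ y + t * (n ⬝ᵥ w) := fun t ht => by
    simpa only [dotProduct_add, dotProduct_smul, smul_eq_mul] using hf2 _ ⟨t, ht, rfl⟩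
  have hdom : ∀ x ∈ sdom K a, n ⬝ᵥ x ≤ u := fun x hx => by
    have hx' : x ∈ closure (interior (sdom K a)) := by
      rw [convex_sdom.closure_interior_eq_closure_of_nonempty_interior ⟨z, hz⟩]
      exact subset_closure hx
    exact closure_minimal (fun x hx => (hf1 x hx).le)
      (isClosed_le (continuous_dot_right n) continuous_const) hx'
  have huy : u ≤ n ⬝ᵥ y := by
    refine ge_of_tendsto (x := nhdsWithin 0 (Ioi 0)) (f := fun t : ℝ => n ⬝ᵥ y + t * (n ⬝ᵥ w)) ?_
      (eventually_nhdsWithin_of_forall hray)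
    refine Tendsto.mono_left ?_ nhdsWithin_le_nhds
    have : Continuous fun t : ℝ => n ⬝ᵥ y + t * (n ⬝ᵥ w) := by fun_prop
    simpa using this.tendsto 0
  have hN : n ∈ normalCone (sdom K a) y := fun x hx => by
    rw [dotProduct_sub]
    linarith [hdom x hx]
  have h1 := hv n hN
  have h2 := hf1 z hz
  have h3 := hdom y hy
  have h4 := hray 1 one_pos
  have h5 : ε * (n ⬝ᵥ (z - y)) < 0 := mul_neg_of_pos_of_neg hε (by rw [dotProduct_sub]; linarith)
  simp only [w, dotProduct_add, dotProduct_smul, smul_eq_mul] at h4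
  linarith

open Pointwise in
/-- The subdifferential formula when the domain has interior points. A subgradient outside the
right-hand side would be separated from it in some direction, contradicting `exists_act_ge`. -/
lemma sgr_subset (hK : IsClosed K) (ha : Continuous a) (hne : K.Nonempty)
    (hint : (interior (sdom K a)).Nonempty) (y : Fin d → ℝ) :
    sgr K a y ⊆ closure (convexHull ℝ (act K a y)) + normalCone (sdom K a) y := by
  intro s hs
  by_contra hcon
  obtain ⟨f, u, hf1, hf2⟩ := geometric_hahn_banach_closed_point
    ((convex_convexHull ℝ _).closure.add (convex_normalCone _ y))
    (isClosed_hull_add_cone hne hint y) hcon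
  obtain ⟨v, hv⟩ := linear_eq_dot (f : (Fin d → ℝ) →ₗ[ℝ] ℝ)
  replace hv : ∀ x, f x = x ⬝ᵥ v := fun x => (hv x).trans (dotProduct_comm _ _)
  simp only [hv] at hf1 hf2
  have hy : y ∈ sdom K a := mem_sdom_of_sgr (hint.mono interior_subset) hs
  obtain ⟨p0, hp0⟩ := act_nonempty_of_sgr hK ha hne hint hs
  have hact : act K a y ⊆ closure (convexHull ℝ (act K a y)) :=
    (subset_convexHull ℝ _).trans subset_closure
  have hcone : ∀ n ∈ normalCone (sdom K a) y, n ⬝ᵥ v ≤ 0 := by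
    intro n hn
    by_contra! hpos
    -- A large multiple of `n` violates the upper bound `u`.
    have hmem : (|u - p0 ⬝ᵥ v| / (n ⬝ᵥ v)) • n ∈ normalCone (sdom K a) y := fun x hx => by
      rw [smul_dotProduct]
      exact mul_nonpos_of_nonneg_of_nonpos (by positivity) (hn x hx)
    have := hf1 _ ⟨p0, hact hp0, _, hmem, rfl⟩
    simp only [add_dotProduct, smul_dotProduct, smul_eq_mul, div_mul_cancel₀ _ hpos.ne'] at this
    linarith [le_abs_self (u - p0 ⬝ᵥ v)]
  have hbelow : ∀ p ∈ act K a y, p ⬝ᵥ v < u := fun p hp => by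
    simpa using hf1 _ ⟨p, hact hp, 0, fun x _ => by simp, rfl⟩
  obtain ⟨z, hz⟩ := hint
  obtain ⟨M, hM⟩ := interior_subset hz
  obtain ⟨c0, hc0⟩ := hne
  set B := M - (c0 ⬝ᵥ y - a c0)
  have hB : ∀ p ∈ sgr K a y, p ⬝ᵥ (z - y) ≤ B := fun p hp => by
    have := hp z M hM c0 hc0
    simp only [B]
    linarith
  -- The tilt is small enough not to destroy the separation of `s` from the active slopes.
  set D := B - s ⬝ᵥ (z - y)
  have hD : 0 ≤ D := sub_nonneg.2 (hB s hs)
  set ε := (s ⬝ᵥ v - u) / (D + 1) with hεdef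
  have hε : 0 < ε := div_pos (by linarith) (by linarith)
  have hεD : ε * (D + 1) = s ⬝ᵥ v - u := div_mul_cancel₀ _ (by linarith)
  obtain ⟨t, ht, hmem⟩ := exists_enter_interior hy hz hcone hε
  obtain ⟨p, hp, hle⟩ := exists_act_ge hK ha ⟨c0, hc0⟩ hs ht hmem
  have h1 := hbelow p hp
  have h2 := mul_le_mul_of_nonneg_left (hB p (act_subset_sgr y hp)) hε.le
  simp only [dotProduct_add, dotProduct_smul, smul_eq_mul] at hle
  have h3 : ε * (D + 1) = ε * B - ε * (s ⬝ᵥ (z - y)) + ε := by simp only [D]; ring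
  linarith

/-- By Carathéodory's theorem, `convexHull A` is a continuous image of the product of a simplex
with a power of `A`. -/
lemma isCompact_convexHull_pi {A : Set (Fin d → ℝ)} (hA : IsCompact A) :
    IsCompact (convexHull ℝ A) := by
  have himg : convexHull ℝ A =
      (fun q : (Fin (d + 1) → ℝ) × (Fin (d + 1) → Fin d → ℝ) => ∑ i, q.1 i • q.2 i) ''
        (stdSimplex ℝ (Fin (d + 1)) ×ˢ Set.univ.pi fun _ => A) := by
    refine Subset.antisymm (fun x hx => ?_) ?_
    · obtain ⟨ι, hι, z, w, hz, hind, hw, hw1, hx⟩ := eq_pos_convex_span_of_mem_convexHull hx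
      have hcard : Fintype.card ι ≤ Fintype.card (Fin (d + 1)) := by
        have h1 := hind.card_le_finrank_succ
        have h2 : Module.finrank ℝ (vectorSpan ℝ (Set.range z)) ≤ d := by
          simpa using Submodule.finrank_le (vectorSpan ℝ (Set.range z))
        rw [Fintype.card_fin]
        omega
      obtain ⟨e⟩ := Function.Embedding.nonempty_of_card_le hcard
      have hιne : Nonempty ι := by
        by_contra h
        rw [not_nonempty_iff] at h
        simp at hw1
      obtain ⟨i0⟩ := hιne
      have hext : ∀ i, Function.extend e w 0 (e i) = w i := fun i => e.injective.extend_apply _ _ i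
      have hext' : ∀ i, Function.extend e z (fun _ => z i0) (e i) = z i :=
        fun i => e.injective.extend_apply _ _ i
      have hzero : ∀ j, j ∉ Set.range e → Function.extend e w 0 j = 0 := fun j hj =>
        Function.extend_apply' _ _ _ hj
      refine ⟨(Function.extend e w 0, Function.extend e z fun _ => z i0), ⟨⟨fun j => ?_, ?_⟩, ?_⟩, ?_⟩
      · by_cases hj : j ∈ Set.range e
        · obtain ⟨i, rfl⟩ := hj
          simpa only [hext] using (hw i).le
        · simp only [hzero j hj, le_refl]
      · rw [← hw1]
        exact (Fintype.sum_of_injective e e.injective _ _ hzero fun i => (hext i).symm).symm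
      · intro j _
        by_cases hj : j ∈ Set.range e
        · obtain ⟨i, rfl⟩ := hj
          simpa only [hext'] using hz ⟨i, rfl⟩
        · simpa only [Function.extend_apply' _ _ _ hj] using hz ⟨i0, rfl⟩
      · rw [← hx]
        exact (Fintype.sum_of_injective e e.injective _ _
          (fun j hj => by simp only [hzero j hj, zero_smul])
          fun i => by simp only [hext, hext']).symm
    · rintro _ ⟨⟨w, z⟩, ⟨⟨hw, hw1⟩, hz⟩, rfl⟩
      exact (convex_convexHull ℝ A).sum_mem (fun i _ => hw i) hw1
        fun i _ => subset_convexHull ℝ A (hz i (Set.mem_univ i))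
  rw [himg]
  refine IsCompact.image ((isCompact_stdSimplex ℝ _).prod (isCompact_univ_pi fun _ => hA)) ?_
  fun_prop

lemma normalCone_of_interior {C : Set (Fin d → ℝ)} {y n : Fin d → ℝ} (hy : y ∈ interior C)
    (hn : n ∈ normalCone C y) : n = 0 := by
  have hcont : Continuous fun t : ℝ => y + t • n := by fun_prop
  have hev : ∀ᶠ t in nhds (0 : ℝ), y + t • n ∈ interior C :=
    hcont.continuousAt.eventually (by simpa using isOpen_interior.mem_nhds hy)
  obtain ⟨ε, hε, hb⟩ := Metric.eventually_nhds_iff.1 hev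
  have h := hn _ (interior_subset (hb (y := ε / 2) (by
    rw [dist_zero_right, Real.norm_eq_abs, abs_of_pos (half_pos hε)]; exact half_lt_self hε)))
  rw [add_sub_cancel_left, dotProduct_smul, smul_eq_mul] at h
  have h0 : n ⬝ᵥ n ≤ 0 := by
    by_contra! hpos
    exact absurd h (not_le.2 (mul_pos (half_pos hε) hpos))
  have h1 : 0 ≤ n ⬝ᵥ n := Finset.sum_nonneg fun i _ => mul_self_nonneg _
  exact dotProduct_self_eq_zero.1 (le_antisymm h0 h1)

lemma sgr_eq_of_interior (hK : IsClosed K) (ha : Continuous a) (hne : K.Nonempty)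
    {y : Fin d → ℝ} (hy : y ∈ interior (sdom K a)) :
    sgr K a y = convexHull ℝ (act K a y) := by
  refine Subset.antisymm (fun s hs => ?_) (convexHull_min (act_subset_sgr y) (convex_sgr y))
  obtain ⟨c, hc, n, hn, rfl⟩ := sgr_subset hK ha hne ⟨y, hy⟩ y hs
  have hact : IsCompact (act K a y) := by
    obtain ⟨c0, hc0⟩ := hne
    refine (isCompact_slopes hK ha hy (c0 ⬝ᵥ y - a c0)).of_isClosed_subset ?_
      fun c hc => ⟨hc.1, hc.2 c0 hc0⟩
    have hset : act K a y = K ∩ ⋂ c' ∈ K, {c | c' ⬝ᵥ y - a c' ≤ c ⬝ᵥ y - a c} := by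
      ext c
      simp [act, UBd]
    rw [hset]
    refine hK.inter ?_
    exact isClosed_iInter fun c' => isClosed_iInter fun _ =>
      isClosed_le continuous_const ((continuous_dot_left y).sub ha)
  rw [(isCompact_convexHull_pi hact).isClosed.closure_eq] at hc
  rw [normalCone_of_interior hy hn]
  simpa using hc

end General

/-! ### The Fitzpatrick function as a supremum over slopes -/

/-- The slopes `S x`, `x ∈ G`, of the affine functions whose supremum is `ψ_G`. -/
def slopes {d : ℕ} (S : Matrix (Fin d) (Fin d) ℝ) (G : Set (Fin d → ℝ)) : Set (Fin d → ℝ) :=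
  {c | S⁻¹.mulVec c ∈ G}

/-- The function `S(x,x)/2` expressed through the slope `c = S x`. -/
def halfq {d : ℕ} (S : Matrix (Fin d) (Fin d) ℝ) (c : Fin d → ℝ) : ℝ :=
  c ⬝ᵥ S⁻¹.mulVec c / 2

section Fitz

variable {d : ℕ} {S : Matrix (Fin d) (Fin d) ℝ} {G : Set (Fin d → ℝ)}

lemma mulVec_inv_mulVec (hdet : IsUnit S.det) (c : Fin d → ℝ) :
    S.mulVec (S⁻¹.mulVec c) = c := by
  rw [mulVec_mulVec, mul_nonsing_inv _ hdet, one_mulVec]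

lemma inv_mulVec_mulVec (hdet : IsUnit S.det) (c : Fin d → ℝ) :
    S⁻¹.mulVec (S.mulVec c) = c := by
  rw [mulVec_mulVec, nonsing_inv_mul _ hdet, one_mulVec]

lemma mulVec_dot (hS : S.IsHermitian) (x y : Fin d → ℝ) : S.mulVec x ⬝ᵥ y = Sb S x y := by
  have h : Sᵀ = S := by simpa [IsHermitian, conjTranspose_eq_transpose_of_trivial] using hS
  rw [Sb, dotProduct_mulVec, ← mulVec_transpose, h]

lemma Sb_comm (hS : S.IsHermitian) (x y : Fin d → ℝ) : Sb S x y = Sb S y x := by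
  rw [← mulVec_dot hS, dotProduct_comm, Sb]

lemma Sb_sub_sub (hS : S.IsHermitian) (x y : Fin d → ℝ) :
    Sb S (x - y) (x - y) = Sb S x x - 2 * Sb S x y + Sb S y y := by
  have := Sb_comm hS x y
  simp only [Sb, mulVec_sub, sub_dotProduct, dotProduct_sub] at *
  linarith

lemma Sb_neg (x : Fin d → ℝ) : Sb S (-x) (-x) = Sb S x x := by
  simp [Sb, mulVec_neg]

lemma continuous_Sb : Continuous fun x : Fin d → ℝ => Sb S x x := by
  unfold Sb; fun_prop

lemma continuous_halfq : Continuous (halfq S) := by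
  unfold halfq; fun_prop

lemma halfq_mulVec (hS : S.IsHermitian) (hdet : IsUnit S.det) (x : Fin d → ℝ) :
    halfq S (S.mulVec x) = Sb S x x / 2 := by
  rw [halfq, inv_mulVec_mulVec hdet, mulVec_dot hS]

lemma mulVec_mem_slopes (hdet : IsUnit S.det) {x : Fin d → ℝ} :
    S.mulVec x ∈ slopes S G ↔ x ∈ G := by
  rw [slopes, mem_ofPred_eq, inv_mulVec_mulVec hdet]

lemma UBd_slopes (hS : S.IsHermitian) (hdet : IsUnit S.det) {y : Fin d → ℝ} {M : ℝ} :
    UBd (slopes S G) (halfq S) y M ↔ ∀ x ∈ G, Sb S x y - Sb S x x / 2 ≤ M := by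
  refine ⟨fun h x hx => ?_, fun h c hc => ?_⟩
  · have := h _ ((mulVec_mem_slopes hdet).2 hx)
    rwa [halfq_mulVec hS hdet, mulVec_dot hS] at this
  · have := h _ hc
    rwa [← halfq_mulVec hS hdet, ← mulVec_dot hS, mulVec_inv_mulVec hdet] at this

lemma fitz_le_iff (hS : S.IsHermitian) (hdet : IsUnit S.det) {y : Fin d → ℝ} {M : ℝ} :
    fitz S G y ≤ (M : EReal) ↔ UBd (slopes S G) (halfq S) y M := by
  rw [UBd_slopes hS hdet, fitz, iSup₂_le_iff]
  simp only [EReal.coe_le_coe_iff]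

lemma le_fitz {x : Fin d → ℝ} (hx : x ∈ G) (y : Fin d → ℝ) :
    ((Sb S x y - Sb S x x / 2 : ℝ) : EReal) ≤ fitz S G y :=
  le_iSup₂_of_le x hx le_rfl

lemma fitz_ne_bot (hne : G.Nonempty) (y : Fin d → ℝ) : fitz S G y ≠ ⊥ := by
  obtain ⟨x, hx⟩ := hne
  exact ne_bot_of_le_ne_bot (EReal.coe_ne_bot _) (le_fitz hx y)

lemma fitz_eq_top_or_coe (hne : G.Nonempty) (y : Fin d → ℝ) :
    fitz S G y = ⊤ ∨ ∃ r : ℝ, fitz S G y = r := by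
  by_cases h : fitz S G y = ⊤
  · exact Or.inl h
  · exact Or.inr ⟨_, (EReal.coe_toReal h (fitz_ne_bot hne y)).symm⟩

lemma sdom_eq (hS : S.IsHermitian) (hdet : IsUnit S.det) (hne : G.Nonempty) :
    sdom (slopes S G) (halfq S) = {y | fitz S G y ≠ ⊤} := by
  ext y
  refine ⟨fun ⟨M, hM⟩ => ne_top_of_le_ne_top (EReal.coe_ne_top M)
    ((fitz_le_iff hS hdet).2 hM), fun h => ?_⟩
  obtain h' | ⟨r, hr⟩ := fitz_eq_top_or_coe (S := S) hne y
  · exact absurd h' h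
  · exact ⟨r, (fitz_le_iff hS hdet).1 hr.le⟩

lemma esubdiff_fitz (hS : S.IsHermitian) (hdet : IsUnit S.det) (hne : G.Nonempty)
    (hdom : (sdom (slopes S G) (halfq S)).Nonempty) (y : Fin d → ℝ) :
    esubdiff (fitz S G) y = sgr (slopes S G) (halfq S) y := by
  ext s
  refine ⟨fun hs z M hM => ?_, fun hs z => ?_⟩
  · rw [← fitz_le_iff hS hdet] at hM ⊢
    have h := hs z
    obtain hy | ⟨r, hr⟩ := fitz_eq_top_or_coe (S := S) hne y
    · -- `⊤ - ⊤ = ⊥` in `EReal`, so no subgradient exists where `ψ_G` is infinite.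
      rw [hy, EReal.sub_top] at h
      exact absurd (le_bot_iff.1 h) (EReal.coe_ne_bot _)
    · obtain hz | ⟨q, hq⟩ := fitz_eq_top_or_coe (S := S) hne z
      · rw [hz] at hM
        exact absurd (top_le_iff.1 hM) (EReal.coe_ne_top _)
      · rw [hr, hq, ← EReal.coe_sub, EReal.coe_le_coe_iff] at h
        rw [hq, EReal.coe_le_coe_iff] at hM
        rw [hr, EReal.coe_le_coe_iff]
        linarith
  · obtain hy | ⟨r, hr⟩ := fitz_eq_top_or_coe (S := S) hne y
    · have := mem_sdom_of_sgr hdom hs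
      rw [sdom_eq hS hdet hne] at this
      exact absurd hy this
    · obtain hz | ⟨q, hq⟩ := fitz_eq_top_or_coe (S := S) hne z
      · rw [hz, hr, EReal.top_sub_coe]
        exact le_top
      · have h := (fitz_le_iff hS hdet).2 (hs z q ((fitz_le_iff hS hdet).1 hq.le))
        rw [hr, EReal.coe_le_coe_iff] at h
        rw [hq, hr, ← EReal.coe_sub, EReal.coe_le_coe_iff]
        linarith

lemma mem_SProj_iff (hS : S.IsHermitian) (hdet : IsUnit S.det) {x y : Fin d → ℝ} :
    x ∈ SProj S G y ↔ S.mulVec x ∈ act (slopes S G) (halfq S) y := by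
  have h1 : x ∈ SProj S G y ↔
      x ∈ G ∧ ∀ z ∈ G, Sb S (x - y) (x - y) ≤ Sb S (z - y) (z - y) := Iff.rfl
  have h2 : S.mulVec x ∈ act (slopes S G) (halfq S) y ↔ S.mulVec x ∈ slopes S G ∧
      UBd (slopes S G) (halfq S) y (S.mulVec x ⬝ᵥ y - halfq S (S.mulVec x)) := Iff.rfl
  rw [h1, h2, mulVec_mem_slopes hdet, UBd_slopes hS hdet, halfq_mulVec hS hdet, mulVec_dot hS]
  refine and_congr_right fun _ => forall₂_congr fun z _ => ?_
  rw [Sb_sub_sub hS, Sb_sub_sub hS]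
  constructor <;> intro h <;> linarith

lemma image_SProj (hS : S.IsHermitian) (hdet : IsUnit S.det) (y : Fin d → ℝ) :
    S.mulVec '' SProj S G y = act (slopes S G) (halfq S) y := by
  ext c
  refine ⟨?_, fun hc => ⟨S⁻¹.mulVec c, ?_, mulVec_inv_mulVec hdet c⟩⟩
  · rintro ⟨x, hx, rfl⟩
    exact (mem_SProj_iff hS hdet).1 hx
  · rwa [mem_SProj_iff hS hdet, mulVec_inv_mulVec hdet]

/-! ### Consequences of maximality -/

lemma UBd_of_mem (hS : S.IsHermitian) (hdet : IsUnit S.det) (hG : SMono S G) {y : Fin d → ℝ}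
    (hy : y ∈ G) : UBd (slopes S G) (halfq S) y (Sb S y y / 2) := by
  rw [UBd_slopes hS hdet]
  intro x hx
  have := hG x hx y hy
  rw [Sb_sub_sub hS] at this
  linarith

lemma subset_sdom (hS : S.IsHermitian) (hdet : IsUnit S.det) (hG : SMono S G) :
    G ⊆ sdom (slopes S G) (halfq S) :=
  fun _ hy => ⟨_, UBd_of_mem hS hdet hG hy⟩

/-- Maximality: `ψ_G(y) ≤ S(y,y)/2` only for `y ∈ G`. -/
lemma mem_of_UBd (hS : S.IsHermitian) (hdet : IsUnit S.det) (hG : MaxSMono S G) {y : Fin d → ℝ}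
    (hy : UBd (slopes S G) (halfq S) y (Sb S y y / 2)) : y ∈ G := by
  rw [UBd_slopes hS hdet] at hy
  have hpos : ∀ x ∈ G, 0 ≤ Sb S (x - y) (x - y) := fun x hx => by
    rw [Sb_sub_sub hS]
    linarith [hy x hx]
  have hmono : SMono S (insert y G) := by
    rintro x (rfl | hx) z (rfl | hz)
    · simp [Sb]
    · rw [← neg_sub, Sb_neg]
      exact hpos z hz
    · exact hpos x hx
    · exact hG.1 x hx z hz
  rw [← hG.2 _ hmono (subset_insert _ _)]
  exact mem_insert _ _

lemma MaxSMono.nonempty (hG : MaxSMono S G) : G.Nonempty := by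
  by_contra h
  rw [not_nonempty_iff_eq_empty] at h
  subst h
  have := hG.2 {0} (by rintro x rfl y rfl; simp [Sb]) (empty_subset _)
  exact singleton_ne_empty _ this

lemma MaxSMono.isClosed (hG : MaxSMono S G) : IsClosed G := by
  refine closure_eq_iff_isClosed.1 (hG.2 _ (fun x hx y hy => ?_) subset_closure)
  have hcl : IsClosed {p : (Fin d → ℝ) × (Fin d → ℝ) | 0 ≤ Sb S (p.1 - p.2) (p.1 - p.2)} :=
    isClosed_le continuous_const
      (continuous_Sb.comp (continuous_fst.sub continuous_snd))
  have hmem : (x, y) ∈ closure (G ×ˢ G) := by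
    rw [closure_prod_eq]
    exact ⟨hx, hy⟩
  exact closure_minimal (fun p hp => hG.1 p.1 hp.1 p.2 hp.2) hcl hmem

lemma isClosed_slopes (hG : MaxSMono S G) : IsClosed (slopes S G) :=
  hG.isClosed.preimage (by fun_prop : Continuous fun c : Fin d → ℝ => S⁻¹.mulVec c)

lemma slopes_nonempty (hdet : IsUnit S.det) (hG : MaxSMono S G) : (slopes S G).Nonempty := by
  obtain ⟨x, hx⟩ := hG.nonempty
  exact ⟨_, (mulVec_mem_slopes hdet).2 hx⟩

lemma econj_fitz_of_mem (hS : S.IsHermitian) (hdet : IsUnit S.det) (hG : MaxSMono S G)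
    {x : Fin d → ℝ} (hx : x ∈ G) :
    econj (fitz S G) (S.mulVec x) = ((Sb S x x / 2 : ℝ) : EReal) := by
  refine le_antisymm (iSup_le fun y => ?_) ?_
  · obtain hy | ⟨r, hr⟩ := fitz_eq_top_or_coe (S := S) hG.nonempty y
    · rw [hy, EReal.sub_top]
      exact bot_le
    · have h := le_fitz (S := S) hx y
      rw [hr, EReal.coe_le_coe_iff] at h
      rw [hr, ← EReal.coe_sub, EReal.coe_le_coe_iff, mulVec_dot hS]
      linarith
  · refine le_iSup_of_le x ?_
    have h := (fitz_le_iff hS hdet).2 (UBd_of_mem hS hdet hG.1 hx)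
    refine le_trans ?_ (EReal.sub_le_sub le_rfl h)
    rw [← EReal.coe_sub, EReal.coe_le_coe_iff, mulVec_dot hS]
    linarith

lemma SProj_eq_subdiff (hS : S.IsHermitian) (hdet : IsUnit S.det) (hG : MaxSMono S G)
    (y : Fin d → ℝ) :
    SProj S G y = {x ∈ G | S.mulVec x ∈ sgr (slopes S G) (halfq S) y} := by
  ext x
  rw [mem_SProj_iff hS hdet]
  refine ⟨fun h => ⟨(mulVec_mem_slopes hdet).1 h.1, act_subset_sgr y h⟩, fun ⟨hx, h⟩ =>
    ⟨(mulVec_mem_slopes hdet).2 hx, ?_⟩⟩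
  -- Test the subgradient inequality at `x`, where `ψ_G(x) = S(x,x)/2`.
  refine (h x _ (UBd_of_mem hS hdet hG.1 hx)).mono ?_
  rw [halfq_mulVec hS hdet, dotProduct_sub, mulVec_dot hS, mulVec_dot hS]
  linarith

lemma SProj_eq_conj (hS : S.IsHermitian) (hdet : IsUnit S.det) (hG : MaxSMono S G)
    (y : Fin d → ℝ) :
    SProj S G y = {x ∈ G | y ∈ esubdiff (econj (fitz S G)) (S.mulVec x)} := by
  ext x
  rw [mem_SProj_iff hS hdet]
  refine ⟨fun h => ?_, fun ⟨hx, h⟩ => ⟨(mulVec_mem_slopes hdet).2 hx, ?_⟩⟩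
  · have hx : x ∈ G := (mulVec_mem_slopes hdet).1 h.1
    refine ⟨hx, fun z => ?_⟩
    rw [econj_fitz_of_mem hS hdet hG hx]
    have h1 := (fitz_le_iff hS hdet).2 h.2
    rw [halfq_mulVec hS hdet] at h1
    have h2 : (((z ⬝ᵥ y : ℝ) : EReal) - fitz S G y) ≤ econj (fitz S G) z :=
      le_iSup (fun y => (((z ⬝ᵥ y : ℝ) : EReal) - fitz S G y)) y
    have h3 := (EReal.sub_le_sub le_rfl h1).trans h2
    refine le_trans ?_ (EReal.sub_le_sub h3 le_rfl)
    rw [← EReal.coe_sub, ← EReal.coe_sub, EReal.coe_le_coe_iff, dotProduct_sub,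
      dotProduct_comm y, dotProduct_comm y]
    linarith
  · rw [UBd_slopes hS hdet]
    intro w hw
    have h1 := h (S.mulVec w)
    rw [econj_fitz_of_mem hS hdet hG hx, econj_fitz_of_mem hS hdet hG hw, ← EReal.coe_sub,
      EReal.coe_le_coe_iff, dotProduct_sub, dotProduct_comm y, dotProduct_comm y,
      mulVec_dot hS, mulVec_dot hS] at h1
    rw [halfq_mulVec hS hdet, mulVec_dot hS]
    linarith

/-! ### Reduction to a domain with nonempty interior -/

/-- The vectors orthogonal to all differences of points of `A`, i.e. to the direction of its affine
hull. -/
def perp {d : ℕ} (A : Set (Fin d → ℝ)) : Submodule ℝ (Fin d → ℝ) where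
  carrier := {s | ∀ z ∈ A, ∀ z' ∈ A, s ⬝ᵥ (z - z') = 0}
  add_mem' hs ht z hz z' hz' := by rw [add_dotProduct, hs z hz z' hz', ht z hz z' hz', add_zero]
  zero_mem' z _ z' _ := zero_dotProduct _
  smul_mem' r s hs z hz z' hz' := by rw [smul_dotProduct, hs z hz z' hz', smul_zero]

lemma exists_orthogonal_decomp (V : Submodule ℝ (Fin d → ℝ)) (c : Fin d → ℝ) :
    ∃ v ∈ V, ∀ w ∈ V, w ⬝ᵥ (c - v) = 0 := by
  set e := (WithLp.linearEquiv 2 ℝ (Fin d → ℝ)).symm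
  obtain ⟨y, hy, z, hz, hyz⟩ :=
    (V.map (e : (Fin d → ℝ) →ₗ[ℝ] EuclideanSpace ℝ (Fin d))).exists_add_mem_mem_orthogonal (e c)
  obtain ⟨v, hv, rfl⟩ := hy
  refine ⟨v, hv, fun w hw => ?_⟩
  have h := hz (e w) ⟨w, hw, rfl⟩
  have hz' : z = e (c - v) := by
    rw [map_sub, hyz]
    exact (add_sub_cancel_left _ _).symm
  rw [hz', EuclideanSpace.inner_eq_star_dotProduct] at h
  rw [dotProduct_comm]
  simpa [e] using h

/-- Points of `G` may be moved along `S⁻¹ v` when `v` is orthogonal to the affine hull of the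
domain of `ψ_G`: along this direction `ψ_G` is affine, so the moved point is in the domain, which
makes `v` orthogonal to the displacement, and `ψ_G = S/2` persists. -/
lemma shift_mem (hS : S.IsHermitian) (hdet : IsUnit S.det) (hG : MaxSMono S G)
    {v p : Fin d → ℝ} (hv : v ∈ perp (sdom (slopes S G) (halfq S))) (hp : p ∈ G) :
    p + S⁻¹.mulVec v ∈ G ∧ v ⬝ᵥ S⁻¹.mulVec v = 0 := by
  set n := S⁻¹.mulVec v with hn
  have hSn : S.mulVec n = v := mulVec_inv_mulVec hdet v
  have hsub := subset_sdom hS hdet hG.1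
  have hxn : ∀ x, Sb S x n = v ⬝ᵥ x := fun x => by rw [Sb, hSn, dotProduct_comm]
  have hadd : ∀ x, Sb S x (p + n) = Sb S x p + v ⬝ᵥ x := fun x => by
    rw [← hxn, Sb, mulVec_add, dotProduct_add, Sb, Sb]
  have hub : UBd (slopes S G) (halfq S) (p + n) (Sb S p p / 2 + v ⬝ᵥ p) := by
    rw [UBd_slopes hS hdet]
    intro w hw
    have h1 := (UBd_slopes hS hdet).1 (UBd_of_mem hS hdet hG.1 hp) w hw
    have h2 := hv w (hsub hw) p (hsub hp)
    rw [dotProduct_sub] at h2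
    rw [hadd]
    linarith
  have hvn : v ⬝ᵥ n = 0 := by
    simpa using hv (p + n) ⟨_, hub⟩ p (hsub hp)
  refine ⟨mem_of_UBd hS hdet hG (hub.mono (le_of_eq ?_)), hvn⟩
  rw [hadd, Sb_comm hS (p + n) p, hadd, dotProduct_add, hvn]
  ring

/-- The family of slopes can be thinned out to the slopes parallel to the affine hull of the domain
of `ψ_G` without changing `ψ_G` on its domain, after which the domain is extended orthogonally
and acquires interior points. -/
lemma exists_reduction (hS : S.IsHermitian) (hdet : IsUnit S.det) (hG : MaxSMono S G) :
    ∃ K0 ⊆ slopes S G, IsClosed K0 ∧ K0.Nonempty ∧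
      (∃ z ∈ interior (sdom K0 (halfq S)), z ∈ sdom (slopes S G) (halfq S)) ∧
      (∀ y ∈ sdom (slopes S G) (halfq S), ∀ M, UBd K0 (halfq S) y M →
        UBd (slopes S G) (halfq S) y M) ∧
      ∀ y, ∀ s ∈ sgr (slopes S G) (halfq S) y, ∃ l ∈ sgr K0 (halfq S) y,
        s - l ∈ perp (sdom (slopes S G) (halfq S)) := by
  set K := slopes S G with hK
  set a := halfq S with ha
  set V := perp (sdom K a) with hV
  set K0 : Set (Fin d → ℝ) := {c ∈ K | ∀ v ∈ V, v ⬝ᵥ c = 0} with hK0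
  have hsub : G ⊆ sdom K a := subset_sdom hS hdet hG.1
  obtain ⟨p0, hp0⟩ := hG.nonempty
  have hproj : ∀ c ∈ K, ∀ v ∈ V, (∀ w ∈ V, w ⬝ᵥ (c - v) = 0) → c - v ∈ K0 := fun c hc v hv h => by
    refine ⟨?_, h⟩
    have := (shift_mem hS hdet hG (V.neg_mem hv) hc).1
    rwa [mulVec_neg, ← sub_eq_add_neg, ← mulVec_sub] at this
  have hUB : ∀ y, (∀ v ∈ V, ∀ p ∈ G, v ⬝ᵥ (y - p) = 0) → ∀ M, UBd K0 a y M → UBd K a y M := by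
    intro y hy M hM c hc
    obtain ⟨v, hv, hort⟩ := exists_orthogonal_decomp V c
    have hl := hproj c hc v hv hort
    have h1 := hM _ hl
    have h2 := hy v hv _ hl.1
    have h3 : v ⬝ᵥ S⁻¹.mulVec v = 0 := (shift_mem hS hdet hG hv hc).2
    have h4 : c ⬝ᵥ S⁻¹.mulVec v = v ⬝ᵥ S⁻¹.mulVec c := by
      have := Sb_comm hS (S⁻¹.mulVec c) (S⁻¹.mulVec v)
      rw [Sb, Sb, mulVec_inv_mulVec hdet, mulVec_inv_mulVec hdet, dotProduct_comm] at this
      rw [dotProduct_comm c, dotProduct_comm v (S⁻¹.mulVec c)]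
      rw [dotProduct_comm v] at this
      exact this.symm
    simp only [ha, halfq, mulVec_sub, sub_dotProduct, dotProduct_sub] at h1 h2 ⊢
    linarith
  have hperp : ∀ y ∈ sdom K a, ∀ v ∈ V, ∀ p ∈ G, v ⬝ᵥ (y - p) = 0 :=
    fun y hy v hv p hp => hv y hy p (hsub hp)
  have hshift : ∀ z, ∀ v ∈ V, ∀ M, UBd K0 a z M → UBd K0 a (z - v) M := by
    intro z v hv M hM c hc
    have := hc.2 v hv
    rw [dotProduct_comm] at this
    rw [dotProduct_sub, this, sub_zero]
    exact hM c hc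
  have hmove : ∀ z, ∃ v ∈ V, ∀ w ∈ V, ∀ p ∈ G, w ⬝ᵥ (z - v - p) = 0 := by
    intro z
    obtain ⟨v, hv, hort⟩ := exists_orthogonal_decomp V (z - p0)
    refine ⟨v, hv, fun w hw p hp => ?_⟩
    have h1 := hort w hw
    have h2 := hw p0 (hsub hp0) p (hsub hp)
    simp only [dotProduct_sub] at h1 h2 ⊢
    linarith
  have hdom : sdom K a ⊆ sdom K0 a := fun y ⟨M, hM⟩ => ⟨M, fun c hc => hM c hc.1⟩
  have hint : (interior (sdom K0 a)).Nonempty := by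
    rw [convex_sdom.interior_nonempty_iff_affineSpan_eq_top]
    by_contra hne
    have hlt : vectorSpan ℝ (sdom K0 a) < ⊤ := by
      refine lt_top_iff_ne_top.2 fun h => hne ?_
      exact (AffineSubspace.affineSpan_eq_top_iff_vectorSpan_eq_top_of_nonempty ℝ _ _
        ⟨p0, hdom (hsub hp0)⟩).2 h
    obtain ⟨f, hf0, hf⟩ := Submodule.exists_le_ker_of_lt_top _ hlt
    obtain ⟨s, hs⟩ := linear_eq_dot f
    have hconst : ∀ z ∈ sdom K0 a, ∀ z' ∈ sdom K0 a, s ⬝ᵥ (z - z') = 0 := fun z hz z' hz' => by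
      rw [← hs]
      exact hf (vsub_mem_vectorSpan ℝ hz hz')
    -- A linear form constant on the extended domain is given by a vector of `V`, hence by a
    -- direction in which that domain is invariant.
    have hsV : s ∈ V := fun z hz z' hz' => hconst z (hdom hz) z' (hdom hz')
    obtain ⟨M, hM⟩ := hdom (hsub hp0)
    have h0 := hconst p0 ⟨M, hM⟩ (p0 - s) ⟨M, hshift p0 s hsV M hM⟩
    rw [sub_sub_cancel] at h0
    refine hf0 (LinearMap.ext fun x => ?_)
    rw [hs, dotProduct_self_eq_zero.1 h0, zero_dotProduct, LinearMap.zero_apply]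
  refine ⟨K0, fun c hc => hc.1, ?_, ?_, ?_, fun y hy => hUB y (hperp y hy), fun y s hs => ?_⟩
  · have hset : K0 = K ∩ ⋂ v ∈ V, {c | v ⬝ᵥ c = 0} := by
      ext c
      simp [hK0]
    rw [hset]
    refine (isClosed_slopes hG).inter ?_
    exact isClosed_iInter fun v => isClosed_iInter fun _ =>
      isClosed_eq (continuous_dot_right v) continuous_const
  · have hc : S.mulVec p0 ∈ K := (mulVec_mem_slopes hdet).2 hp0
    obtain ⟨v, hv, hort⟩ := exists_orthogonal_decomp V (S.mulVec p0)
    exact ⟨_, hproj _ hc v hv hort⟩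
  · obtain ⟨z, hz⟩ := hint
    obtain ⟨v, hv, hA⟩ := hmove z
    have hzv : z - v ∈ interior (sdom K0 a) := by
      have hopen : IsOpen ((fun x : Fin d → ℝ => x + v) ⁻¹' interior (sdom K0 a)) :=
        isOpen_interior.preimage (by fun_prop)
      refine interior_maximal (fun x hx => ?_) hopen (by simpa using hz)
      obtain ⟨M, hM⟩ := interior_subset hx
      exact ⟨M, by simpa using hshift _ v hv M hM⟩
    obtain ⟨M, hM⟩ := interior_subset hzv
    exact ⟨z - v, hzv, M, hUB _ hA M hM⟩
  · have hy : y ∈ sdom K a := mem_sdom_of_sgr ⟨p0, hsub hp0⟩ hs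
    obtain ⟨v, hv, hort⟩ := exists_orthogonal_decomp V s
    refine ⟨s - v, fun z M hM => ?_, by simpa using hv⟩
    obtain ⟨v', hv', hA⟩ := hmove z
    have h1 : UBd K0 a y (M - s ⬝ᵥ (z - v' - y)) := fun c hc =>
      hs _ _ (hUB _ hA M (hshift z v' hv' M hM)) c hc.1
    refine h1.mono (le_of_eq ?_)
    have h2 := hA v hv p0 hp0
    have h3 := hperp y hy v hv p0 hp0
    have h4 := hort v' hv'
    rw [dotProduct_comm] at h4
    simp only [dotProduct_sub, sub_dotProduct] at h2 h3 h4 ⊢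
    linarith

lemma act_reduction {K K0 : Set (Fin d → ℝ)} {a : (Fin d → ℝ) → ℝ} {y : Fin d → ℝ}
    (hsub : K0 ⊆ K) (hUB : ∀ M, UBd K0 a y M → UBd K a y M) : act K0 a y ⊆ act K a y :=
  fun _ hc => ⟨hsub hc.1, hUB _ hc.2⟩

lemma act_nonempty_of_subgradient (hS : S.IsHermitian) (hdet : IsUnit S.det)
    (hG : MaxSMono S G) {y s : Fin d → ℝ} (hs : s ∈ sgr (slopes S G) (halfq S) y) :
    (act (slopes S G) (halfq S) y).Nonempty := by
  obtain ⟨K0, hsub, hcl, hne, ⟨z, hz, hz'⟩, hUB, hsgr⟩ := exists_reduction hS hdet hG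
  obtain ⟨l, hl, -⟩ := hsgr y s hs
  exact (act_nonempty_of_sgr hcl continuous_halfq hne ⟨z, hz⟩ hl).mono
    (act_reduction hsub (hUB y (mem_sdom_of_sgr ⟨z, hz'⟩ hs)))

open Pointwise in
lemma sgr_slopes_subset (hS : S.IsHermitian) (hdet : IsUnit S.det)
    (hG : MaxSMono S G) (y : Fin d → ℝ) :
    sgr (slopes S G) (halfq S) y ⊆ closure (convexHull ℝ (act (slopes S G) (halfq S) y)) +
      normalCone (sdom (slopes S G) (halfq S)) y := by
  intro s hs
  obtain ⟨K0, hsub, hcl, hne, ⟨z, hz, hz'⟩, hUB, hsgr⟩ := exists_reduction hS hdet hG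
  have hy := mem_sdom_of_sgr ⟨z, hz'⟩ hs
  obtain ⟨l, hl, hsl⟩ := hsgr y s hs
  obtain ⟨c, hc, n, hn, hcn⟩ := sgr_subset hcl continuous_halfq hne ⟨z, hz⟩ y hl
  refine ⟨c, closure_mono (convexHull_mono (act_reduction hsub (hUB y hy))) hc, n + (s - l),
    fun x hx => ?_, ?_⟩
  · obtain ⟨M, hM⟩ := hx
    rw [add_dotProduct, hsl x ⟨M, hM⟩ y hy, add_zero]
    exact hn x ⟨M, fun c hc => hM c (hsub hc)⟩
  · rw [← hcn]
    simp only
    abel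

/-- Points with an active slope are dense in the domain: every half-open segment towards a
relative interior point consists of them. -/
lemma sdom_subset_closure (hS : S.IsHermitian) (hdet : IsUnit S.det) (hG : MaxSMono S G) :
    sdom (slopes S G) (halfq S) ⊆ closure {y | (act (slopes S G) (halfq S) y).Nonempty} := by
  intro y hy
  obtain ⟨K0, hsub, hcl, hne, ⟨z, hz, hz'⟩, hUB, -⟩ := exists_reduction hS hdet hG
  obtain ⟨M, hM⟩ := hy
  have hy0 : y ∈ sdom K0 (halfq S) := ⟨M, fun c hc => hM c (hsub hc)⟩
  have hlim : Tendsto (fun t : ℝ => y + t • (z - y)) (nhdsWithin 0 (Ioc 0 1)) (nhds y) := by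
    refine Tendsto.mono_left ?_ nhdsWithin_le_nhds
    have : Continuous fun t : ℝ => y + t • (z - y) := by fun_prop
    simpa using this.tendsto 0
  have hbot : (nhdsWithin (0 : ℝ) (Ioc 0 1)).NeBot := by
    rw [nhdsWithin_Ioc_eq_nhdsGT one_pos]
    infer_instance
  refine mem_closure_of_tendsto hlim (eventually_nhdsWithin_of_forall fun t ht => ?_)
  have h1 := convex_sdom.add_smul_sub_mem_interior hy0 hz ht
  have h2 : y + t • (z - y) ∈ sdom (slopes S G) (halfq S) :=
    convex_sdom.add_smul_sub_mem ⟨M, hM⟩ hz' ⟨ht.1.le, ht.2⟩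
  exact (act_nonempty_of_interior hcl continuous_halfq hne h1).mono
    (act_reduction hsub (hUB _ h2))

end Fitz

open Pointwise in
/-- Theorem 14: the multi-functions `P_G` and `∂ψ_G` have the same
domain `D`; `P_G(y) = {x ∈ G : Sx ∈ ∂ψ_G(y)} = {x ∈ G : y ∈ ∂ψ_G*(Sx)}`; for `y ∈ D`,
`∂ψ_G(y) = clconv(S·P_G(y)) + N_{cl D}(y)`; and if `D` has nonempty interior, then
`interior D = interior (dom ψ_G)` and `∂ψ_G(y) = conv(S·P_G(y))` on `interior D`. -/
theorem subdifferential_and_projection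
    (d m : ℕ) (S : Matrix (Fin d) (Fin d) ℝ) (hS : S.IsHermitian)
    (hrank : IsUnit S.det)
    (hm : Nat.card {i : Fin d // 0 < hS.eigenvalues i} = m)
    (G : Set (Fin d → ℝ)) (hG : MaxSMono S G) :
    {y | (SProj S G y).Nonempty} = {y | (esubdiff (fitz S G) y).Nonempty} ∧
    (∀ y : Fin d → ℝ,
      SProj S G y = {x ∈ G | S.mulVec x ∈ esubdiff (fitz S G) y} ∧
      SProj S G y = {x ∈ G | y ∈ esubdiff (econj (fitz S G)) (S.mulVec x)}) ∧
    (∀ y : Fin d → ℝ, (esubdiff (fitz S G) y).Nonempty →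
      esubdiff (fitz S G) y =
        closure (convexHull ℝ (S.mulVec '' SProj S G y)) +
          normalCone (closure {z | (esubdiff (fitz S G) z).Nonempty}) y) ∧
    ((interior {z | (esubdiff (fitz S G) z).Nonempty}).Nonempty →
      interior {z | (esubdiff (fitz S G) z).Nonempty} =
        interior {z | fitz S G z ≠ ⊤} ∧
      ∀ y ∈ interior {z | (esubdiff (fitz S G) z).Nonempty},
        esubdiff (fitz S G) y = convexHull ℝ (S.mulVec '' SProj S G y)) := by
  have hne := hG.nonempty
  have hdom : (sdom (slopes S G) (halfq S)).Nonempty := hne.mono (subset_sdom hS hrank hG.1)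
  have hsub := esubdiff_fitz hS hrank hne hdom
  have hact : ∀ y, (sgr (slopes S G) (halfq S) y).Nonempty ↔
      (act (slopes S G) (halfq S) y).Nonempty := fun y =>
    ⟨fun ⟨_, hs⟩ => act_nonempty_of_subgradient hS hrank hG hs,
      fun h => h.mono (act_subset_sgr y)⟩
  have hD : {z | (sgr (slopes S G) (halfq S) z).Nonempty} ⊆ sdom (slopes S G) (halfq S) :=
    fun z ⟨_, hs⟩ => mem_sdom_of_sgr hdom hs
  have hcl : closure {z | (sgr (slopes S G) (halfq S) z).Nonempty} =
      closure (sdom (slopes S G) (halfq S)) := by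
    refine Subset.antisymm (closure_mono hD) (closure_minimal ?_ isClosed_closure)
    simpa only [hact] using sdom_subset_closure hS hrank hG
  simp only [hsub, image_SProj hS hrank, hcl, normalCone_closure]
  refine ⟨?_, fun y => ⟨SProj_eq_subdiff hS hrank hG y, SProj_eq_conj hS hrank hG y⟩,
    fun y _ => ?_, fun _ => ⟨?_, fun y hy => ?_⟩⟩
  · ext y
    rw [mem_ofPred_eq, mem_ofPred_eq, hact, ← image_SProj hS hrank, image_nonempty]
  · refine Subset.antisymm (sgr_slopes_subset hS hrank hG y) ?_
    rintro _ ⟨c, hc, n, hn, rfl⟩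
    exact add_normal_mem_sgr (closure_convexHull_act_subset y hc) hn
  · rw [← sdom_eq hS hrank hne]
    refine Subset.antisymm (interior_mono hD) (interior_maximal (fun y hy => ?_) isOpen_interior)
    exact (hact y).2 (act_nonempty_of_interior (isClosed_slopes hG) continuous_halfq
      (slopes_nonempty hrank hG) hy)
  · exact sgr_eq_of_interior (isClosed_slopes hG) continuous_halfq (slopes_nonempty hrank hG)
      (interior_mono hD hy)

end
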